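/- arXiv:1305.6408 — 9 statements merged into one kernel-verified Lean document; each statement's English description precedes it below -/
import Mathlib

section
/- Let (T,d) be a locally compact, separable metric space and let f_n, f ∈ ℓ∞_loc(T). Then the epigraphs epi f_n converge in the Painlevé–Kuratowski sense to epi f_∧ and the hypographs hypo f_n converge in the Painlevé–Kuratowski sense to hypo f_∨ if and only if f_n hypi-converges to f, i.e., for every x ∈ T: (a) liminf_n f_n(x_n) ≥ f_∧(x) for every sequence x_n → x; (b) there exists a sequence x_n → x with limsup_n f_n(x_n) ≤ f_∧(x); (c) limsup_n f_n(x_n) ≤ f_∨(x) for every sequence x_n → x; (d) there exists a sequence x_n → x with liminf_n f_n(x_n) ≥ f_∨(x). -/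
open Filter Topology Metric

variable {T : Type*}

/-- Lower semicontinuous hull of a real-valued function on a metric space,
with values in the extended reals. -/
noncomputable def lscHull [MetricSpace T] (f : T → ℝ) (x : T) : EReal :=
  ⨆ (ε : ℝ) (_ : 0 < ε), ⨅ (y : T) (_ : y ∈ Metric.ball x ε), (f y : EReal)

/-- Upper semicontinuous hull. -/
noncomputable def uscHull [MetricSpace T] (f : T → ℝ) (x : T) : EReal :=
  ⨅ (ε : ℝ) (_ : 0 < ε), ⨆ (y : T) (_ : y ∈ Metric.ball x ε), (f y : EReal)

/-- Locally bounded: bounded on every compact set. -/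
def LocBounded [MetricSpace T] (f : T → ℝ) : Prop :=
  ∀ K : Set T, IsCompact K → ∃ M : ℝ, ∀ x ∈ K, |f x| ≤ M

/-- Hypi-convergence of a sequence of functions via the pointwise criteria. -/
def HypiConv [MetricSpace T] (F : ℕ → T → ℝ) (f : T → ℝ) : Prop :=
  ∀ x : T,
    (∀ u : ℕ → T, Tendsto u atTop (𝓝 x) →
      lscHull f x ≤ liminf (fun n => ((F n (u n) : ℝ) : EReal)) atTop) ∧
    (∃ u : ℕ → T, Tendsto u atTop (𝓝 x) ∧
      limsup (fun n => ((F n (u n) : ℝ) : EReal)) atTop ≤ lscHull f x) ∧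
    (∀ u : ℕ → T, Tendsto u atTop (𝓝 x) →
      limsup (fun n => ((F n (u n) : ℝ) : EReal)) atTop ≤ uscHull f x) ∧
    (∃ u : ℕ → T, Tendsto u atTop (𝓝 x) ∧
      uscHull f x ≤ liminf (fun n => ((F n (u n) : ℝ) : EReal)) atTop)

/-- Epigraph of a real-valued function, as a subset of `T × ℝ`. -/
def epigraph [MetricSpace T] (f : T → ℝ) : Set (T × ℝ) := {p | f p.1 ≤ p.2}

/-- Hypograph of a real-valued function. -/
def hypograph [MetricSpace T] (f : T → ℝ) : Set (T × ℝ) := {p | p.2 ≤ f p.1}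

/-- Epigraph of an extended-real-valued function, as a subset of `T × ℝ`. -/
def epigraphE [MetricSpace T] (g : T → EReal) : Set (T × ℝ) := {p | g p.1 ≤ (p.2 : EReal)}

/-- Hypograph of an extended-real-valued function. -/
def hypographE [MetricSpace T] (g : T → EReal) : Set (T × ℝ) := {p | (p.2 : EReal) ≤ g p.1}

/-- Painlevé–Kuratowski convergence of a sequence of subsets of `T × ℝ` to a set `L`:
(i) every point of `L` is the limit of a sequence of points of the `A n`;
(ii) every limit of a converging subsequence of points of the `A n` belongs to `L`. -/
def PKConv [MetricSpace T] (A : ℕ → Set (T × ℝ)) (L : Set (T × ℝ)) : Prop :=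
  (∀ a ∈ L, ∃ u : ℕ → T × ℝ, (∀ n, u n ∈ A n) ∧ Tendsto u atTop (𝓝 a)) ∧
  (∀ φ : ℕ → ℕ, StrictMono φ →
    ∀ u : ℕ → T × ℝ, (∀ k, u k ∈ A (φ k)) →
      ∀ a : T × ℝ, Tendsto u atTop (𝓝 a) → a ∈ L)

theorem aux_extend [MetricSpace T] (φ : ℕ → ℕ) (hφ : StrictMono φ) (w : ℕ → T) (x : T)
    (hw : Tendsto w atTop (𝓝 x)) :
    ∃ v : ℕ → T, Tendsto v atTop (𝓝 x) ∧ ∀ k, v (φ k) = w k := by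
  refine ⟨Function.extend φ w (fun _ => x), ?_, fun k => hφ.injective.extend_apply _ _ _⟩
  intro U hU
  have h1 : ∀ᶠ k in atTop, w k ∈ U := hw hU
  obtain ⟨K, hK⟩ := eventually_atTop.1 h1
  refine eventually_atTop.2 ⟨φ K, fun n hn => ?_⟩
  show Function.extend φ w (fun _ => x) n ∈ U
  by_cases h : ∃ k, φ k = n
  · obtain ⟨k, rfl⟩ := h
    rw [hφ.injective.extend_apply]
    exact hK k (hφ.le_iff_le.1 hn)
  · rw [Function.extend_apply' _ _ _ h]
    exact mem_of_mem_nhds hU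

theorem aux_epi [MetricSpace T] (F : ℕ → T → ℝ) (g : T → EReal)
    (hg : ∀ x, ∃ r : ℝ, g x = (r : EReal)) :
    PKConv (fun n => epigraph (F n)) (epigraphE g) ↔
    ∀ x : T, (∀ u : ℕ → T, Tendsto u atTop (𝓝 x) →
      g x ≤ liminf (fun n => ((F n (u n) : ℝ) : EReal)) atTop) ∧
    (∃ u : ℕ → T, Tendsto u atTop (𝓝 x) ∧
      limsup (fun n => ((F n (u n) : ℝ) : EReal)) atTop ≤ g x) := by
  constructor
  · rintro ⟨h1, h2⟩ x
    constructor
    · intro u hu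
      by_contra! hlt
      obtain ⟨c, hc1, hc2⟩ := EReal.lt_iff_exists_real_btwn.1 hlt
      have hfr := frequently_lt_of_liminf_lt (by isBoundedDefault) hc1
      obtain ⟨φ, hφ, hφ2⟩ := extraction_of_frequently_atTop hfr
      have := h2 φ hφ (fun k => (u (φ k), c)) (fun k => by
        have := hφ2 k
        exact (EReal.coe_lt_coe_iff.1 this).le) (x, c)
        ((hu.comp hφ.tendsto_atTop).prodMk_nhds tendsto_const_nhds)
      exact absurd hc2 (not_lt.2 this)
    · obtain ⟨r, hr⟩ := hg x
      obtain ⟨u, hu, hu2⟩ := h1 (x, r) (by show g x ≤ _; exact hr.le)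
      refine ⟨fun n => (u n).1, (continuous_fst.tendsto _).comp hu2, ?_⟩
      have h3 : Tendsto (fun n => (((u n).2 : ℝ) : EReal)) atTop (𝓝 (r : EReal)) :=
        (continuous_coe_real_ereal.tendsto _).comp ((continuous_snd.tendsto _).comp hu2)
      rw [hr, ← h3.limsup_eq]
      exact limsup_le_limsup (Eventually.of_forall fun n => EReal.coe_le_coe_iff.2 (hu n))
  · intro h
    constructor
    · rintro ⟨x, y⟩ hxy
      obtain ⟨u, hu, hu2⟩ := (h x).2
      refine ⟨fun n => (u n, max y (F n (u n))), fun n => le_max_right y (F n (u n)),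
        hu.prodMk_nhds ?_⟩
      have hle := hu2.trans hxy
      refine tendsto_order.2 ⟨fun a ha => Eventually.of_forall fun n => lt_max_of_lt_left ha,
        fun a ha => ?_⟩
      have := eventually_lt_of_limsup_lt (lt_of_le_of_lt hle (EReal.coe_lt_coe_iff.2 ha))
      filter_upwards [this] with n hn
      exact max_lt ha (EReal.coe_lt_coe_iff.1 hn)
    · rintro φ hφ u hu ⟨x, y⟩ hxy
      obtain ⟨v, hv, hv2⟩ := aux_extend φ hφ (fun k => (u k).1) x
        ((continuous_fst.tendsto _).comp hxy)
      show g x ≤ y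
      by_contra! hlt
      obtain ⟨c, hc1, hc2⟩ := EReal.lt_iff_exists_real_btwn.1 hlt
      have h3 := hφ.tendsto_atTop.eventually
        (eventually_lt_of_lt_liminf (hc2.trans_le ((h x).1 v hv)))
      have h4 : Tendsto (fun k => (u k).2) atTop (𝓝 y) := (continuous_snd.tendsto _).comp hxy
      have : c ≤ y := by
        refine ge_of_tendsto h4 ?_
        filter_upwards [h3] with k hk
        rw [hv2] at hk
        exact (EReal.coe_lt_coe_iff.1 hk).le.trans (hu k)
      exact absurd (EReal.coe_lt_coe_iff.1 hc1) (not_lt.2 this)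

theorem aux_hypo [MetricSpace T] (F : ℕ → T → ℝ) (g : T → EReal)
    (hg : ∀ x, ∃ r : ℝ, g x = (r : EReal)) :
    PKConv (fun n => hypograph (F n)) (hypographE g) ↔
    ∀ x : T, (∀ u : ℕ → T, Tendsto u atTop (𝓝 x) →
      limsup (fun n => ((F n (u n) : ℝ) : EReal)) atTop ≤ g x) ∧
    (∃ u : ℕ → T, Tendsto u atTop (𝓝 x) ∧
      g x ≤ liminf (fun n => ((F n (u n) : ℝ) : EReal)) atTop) := by
  constructor
  · rintro ⟨h1, h2⟩ x
    constructor
    · intro u hu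
      by_contra! hlt
      obtain ⟨c, hc1, hc2⟩ := EReal.lt_iff_exists_real_btwn.1 hlt
      have hfr := frequently_lt_of_lt_limsup (by isBoundedDefault) hc2
      obtain ⟨φ, hφ, hφ2⟩ := extraction_of_frequently_atTop hfr
      have := h2 φ hφ (fun k => (u (φ k), c)) (fun k => by
        have := hφ2 k
        exact (EReal.coe_lt_coe_iff.1 this).le) (x, c)
        ((hu.comp hφ.tendsto_atTop).prodMk_nhds tendsto_const_nhds)
      exact absurd hc1 (not_lt.2 this)
    · obtain ⟨r, hr⟩ := hg x
      obtain ⟨u, hu, hu2⟩ := h1 (x, r) (by show _ ≤ g x; exact hr.ge)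
      refine ⟨fun n => (u n).1, (continuous_fst.tendsto _).comp hu2, ?_⟩
      have h3 : Tendsto (fun n => (((u n).2 : ℝ) : EReal)) atTop (𝓝 (r : EReal)) :=
        (continuous_coe_real_ereal.tendsto _).comp ((continuous_snd.tendsto _).comp hu2)
      rw [hr, ← h3.liminf_eq]
      exact liminf_le_liminf (Eventually.of_forall fun n => EReal.coe_le_coe_iff.2 (hu n))
  · intro h
    constructor
    · rintro ⟨x, y⟩ hxy
      obtain ⟨u, hu, hu2⟩ := (h x).2
      refine ⟨fun n => (u n, min y (F n (u n))), fun n => min_le_right y (F n (u n)),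
        hu.prodMk_nhds ?_⟩
      have hle := le_trans hxy hu2
      refine tendsto_order.2 ⟨fun a ha => ?_,
        fun a ha => Eventually.of_forall fun n => min_lt_of_left_lt ha⟩
      have := eventually_lt_of_lt_liminf (lt_of_lt_of_le (EReal.coe_lt_coe_iff.2 ha) hle)
      filter_upwards [this] with n hn
      exact lt_min ha (EReal.coe_lt_coe_iff.1 hn)
    · rintro φ hφ u hu ⟨x, y⟩ hxy
      obtain ⟨v, hv, hv2⟩ := aux_extend φ hφ (fun k => (u k).1) x
        ((continuous_fst.tendsto _).comp hxy)
      show y ≤ g x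
      by_contra! hlt
      obtain ⟨c, hc1, hc2⟩ := EReal.lt_iff_exists_real_btwn.1 hlt
      have h3 := hφ.tendsto_atTop.eventually
        (eventually_lt_of_limsup_lt (lt_of_le_of_lt ((h x).1 v hv) hc1))
      have h4 : Tendsto (fun k => (u k).2) atTop (𝓝 y) := (continuous_snd.tendsto _).comp hxy
      have : y ≤ c := by
        refine le_of_tendsto h4 ?_
        filter_upwards [h3] with k hk
        rw [hv2] at hk
        exact le_trans (hu k) (EReal.coe_lt_coe_iff.1 hk).le
      exact absurd (EReal.coe_lt_coe_iff.1 hc2) (not_lt.2 this)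

theorem aux_ball [MetricSpace T] [LocallyCompactSpace T] (f : T → ℝ) (hf : LocBounded f) (x : T) :
    ∃ ε > 0, ∃ M : ℝ, ∀ y ∈ Metric.ball x ε, |f y| ≤ M := by
  obtain ⟨K, hK, hx⟩ := exists_compact_mem_nhds x
  obtain ⟨ε, hε, hb⟩ := Metric.mem_nhds_iff.1 hx
  obtain ⟨M, hM⟩ := hf K hK
  exact ⟨ε, hε, M, fun y hy => hM y (hb hy)⟩

theorem aux_real (a : EReal) (m M : ℝ) (h1 : (m : EReal) ≤ a) (h2 : a ≤ (M : EReal)) :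
    ∃ r : ℝ, a = (r : EReal) :=
  ⟨a.toReal, (EReal.coe_toReal (ne_top_of_le_ne_top (EReal.coe_ne_top M) h2)
    (ne_bot_of_le_ne_bot (EReal.coe_ne_bot m) h1)).symm⟩

theorem aux_lsc [MetricSpace T] [LocallyCompactSpace T] (f : T → ℝ) (hf : LocBounded f) (x : T) :
    ∃ r : ℝ, lscHull f x = (r : EReal) := by
  obtain ⟨ε, hε, M, hM⟩ := aux_ball f hf x
  refine aux_real _ (-M) (f x) ?_ ?_
  · refine le_trans ?_ (le_iSup₂ (f := fun (ε : ℝ) (_ : 0 < ε) =>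
      ⨅ (y : T) (_ : y ∈ Metric.ball x ε), (f y : EReal)) ε hε)
    exact le_iInf₂ fun y hy => EReal.coe_le_coe_iff.2 (abs_le.1 (hM y hy)).1
  · exact iSup₂_le fun δ hδ => iInf₂_le x (Metric.mem_ball_self hδ)

theorem aux_usc [MetricSpace T] [LocallyCompactSpace T] (f : T → ℝ) (hf : LocBounded f) (x : T) :
    ∃ r : ℝ, uscHull f x = (r : EReal) := by
  obtain ⟨ε, hε, M, hM⟩ := aux_ball f hf x
  refine aux_real _ (f x) M ?_ ?_
  · exact le_iInf₂ fun δ hδ => le_iSup₂ (f := fun (y : T) (_ : y ∈ Metric.ball x δ) =>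
      (f y : EReal)) x (Metric.mem_ball_self hδ)
  · refine le_trans (iInf₂_le (f := fun (ε : ℝ) (_ : 0 < ε) =>
      ⨆ (y : T) (_ : y ∈ Metric.ball x ε), (f y : EReal)) ε hε) ?_
    exact iSup₂_le fun y hy => EReal.coe_le_coe_iff.2 (abs_le.1 (hM y hy)).2

/-- On a locally compact separable metric space, for locally bounded
functions `F n` and `f`, Painlevé–Kuratowski convergence of the epigraphs of `F n`
to the epigraph of the lsc hull of `f` together with Painlevé–Kuratowski convergence
of the hypographs of `F n` to the hypograph of the usc hull of `f` is equivalent to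
hypi-convergence of `F n` to `f`. -/
theorem stmt0 [MetricSpace T] [LocallyCompactSpace T] [TopologicalSpace.SeparableSpace T]
    (F : ℕ → T → ℝ) (f : T → ℝ)
    (hF : ∀ n, LocBounded (F n)) (hf : LocBounded f) :
    (PKConv (fun n => epigraph (F n)) (epigraphE (lscHull f)) ∧
      PKConv (fun n => hypograph (F n)) (hypographE (uscHull f))) ↔
      HypiConv F f := by
  rw [aux_epi F _ (aux_lsc f hf), aux_hypo F _ (aux_usc f hf), ← forall_and]
  exact forall_congr' fun x => and_assoc
end

section
/- Let (T,d) be a locally compact, separable metric space, let K ⊆ T be compact, and let f ∈ ℓ∞_loc(T) be continuous at every point of K. If f_n ∈ ℓ∞_loc(T) hypi-converges to f, then sup_{x ∈ K} |f_n(x) − f(x)| → 0 as n → ∞. -/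
open Filter Topology Metric

variable {T : Type*}

theorem aux_lsc_s1 [MetricSpace T] (f : T → ℝ) (x : T) (h : ContinuousAt f x) :
    (f x : EReal) ≤ lscHull f x := by
  refine le_of_forall_lt fun c hc => ?_
  obtain ⟨c', hc1, hc2⟩ := exists_between hc
  have h2 : Tendsto (fun y => (f y : EReal)) (𝓝 x) (𝓝 (f x : EReal)) :=
    (continuous_coe_real_ereal.tendsto _).comp h
  obtain ⟨ε, hε, hb⟩ := Metric.eventually_nhds_iff_ball.1 (h2.eventually (lt_mem_nhds hc2))
  refine hc1.trans_le ?_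
  unfold lscHull
  exact le_iSup₂_of_le ε hε (le_iInf₂ fun y hy => (hb y hy).le)

theorem aux_usc_s1 [MetricSpace T] (f : T → ℝ) (x : T) (h : ContinuousAt f x) :
    uscHull f x ≤ (f x : EReal) := by
  refine le_of_forall_gt fun c hc => ?_
  obtain ⟨c', hc1, hc2⟩ := exists_between hc
  have h2 : Tendsto (fun y => (f y : EReal)) (𝓝 x) (𝓝 (f x : EReal)) :=
    (continuous_coe_real_ereal.tendsto _).comp h
  obtain ⟨ε, hε, hb⟩ := Metric.eventually_nhds_iff_ball.1 (h2.eventually (gt_mem_nhds hc1))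
  refine lt_of_le_of_lt ?_ hc2
  unfold uscHull
  exact iInf₂_le_of_le ε hε (iSup₂_le fun y hy => (hb y hy).le)

theorem aux_extend_s1 [MetricSpace T] (x : T) (φ : ℕ → ℕ) (hφ : StrictMono φ) (y : ℕ → T)
    (hy : Tendsto y atTop (𝓝 x)) :
    Tendsto (Function.extend φ y (fun _ => x)) atTop (𝓝 x) := by
  intro s hs
  obtain ⟨N, hN⟩ := eventually_atTop.1 (hy.eventually hs)
  refine eventually_atTop.2 ⟨φ N, fun n hn => ?_⟩
  by_cases hk : ∃ k, φ k = n
  · obtain ⟨k, rfl⟩ := hk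
    rw [hφ.injective.extend_apply]
    exact hN k (hφ.le_iff_le.1 hn)
  · rw [Function.extend_apply' _ _ _ hk]
    exact mem_of_mem_nhds hs

theorem aux_local [MetricSpace T] (F : ℕ → T → ℝ) (f : T → ℝ) (h : HypiConv F f) (x : T)
    (hc : ContinuousAt f x) (ε : ℝ) (hε : 0 < ε) :
    ∀ᶠ p : ℕ × T in atTop ×ˢ 𝓝 x, |F p.1 p.2 - f x| < ε := by
  by_contra hcon
  obtain ⟨s, hs, hbad⟩ := exists_seq_forall_of_frequently (not_eventually.1 hcon)
  have hs1 : Tendsto (fun n => (s n).1) atTop atTop := tendsto_fst.comp hs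
  have hs2 : Tendsto (fun n => (s n).2) atTop (𝓝 x) := tendsto_snd.comp hs
  obtain ⟨ψ, hψ, hφ⟩ := strictMono_subseq_of_tendsto_atTop hs1
  set φ := (fun n => (s n).1) ∘ ψ with hφd
  have hu := aux_extend_s1 x φ hφ _ (hs2.comp hψ.tendsto_atTop)
  set u := Function.extend φ ((fun n => (s n).2) ∘ ψ) (fun _ => x) with hud
  obtain ⟨h1, -, h3, -⟩ := h x
  have ht : Tendsto (fun n => ((F n (u n) : ℝ) : EReal)) atTop (𝓝 (f x : EReal)) :=
    tendsto_of_le_liminf_of_limsup_le ((aux_lsc_s1 f x hc).trans (h1 u hu))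
      ((h3 u hu).trans (aux_usc_s1 f x hc))
  have ht' : Tendsto (fun n => F n (u n)) atTop (𝓝 (f x)) := EReal.tendsto_coe.1 ht
  obtain ⟨k, hk⟩ :=
    (hφ.tendsto_atTop.eventually (Metric.tendsto_nhds.1 ht' ε hε)).exists
  rw [Real.dist_eq, hud, hφ.injective.extend_apply] at hk
  exact hbad (ψ k) hk

/-- hypi-convergence implies uniform convergence on compact sets
contained in the continuity points of the limit. -/
theorem stmt1 [MetricSpace T] [LocallyCompactSpace T] [TopologicalSpace.SeparableSpace T]
    (K : Set T) (hK : IsCompact K)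
    (F : ℕ → T → ℝ) (f : T → ℝ)
    (hF : ∀ n, LocBounded (F n)) (hf : LocBounded f)
    (hcont : ∀ x ∈ K, ContinuousAt f x)
    (hhypi : HypiConv F f) :
    ∀ ε > (0 : ℝ), ∀ᶠ n in atTop, ∀ x ∈ K, |F n x - f x| < ε := by
  intro ε hε
  have key : {p : ℕ × T | |F p.1 p.2 - f p.2| < ε} ∈ atTop ×ˢ 𝓝ˢ K := by
    refine hK.mem_prod_nhdsSet_of_forall fun x hx => ?_
    have h1 := aux_local F f hhypi x (hcont x hx) (ε / 2) (half_pos hε)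
    have h2 : ∀ᶠ p : ℕ × T in atTop ×ˢ 𝓝 x, dist (f p.2) (f x) < ε / 2 :=
      tendsto_snd.eventually (Metric.tendsto_nhds.1 (hcont x hx) (ε / 2) (half_pos hε))
    filter_upwards [h1, h2] with p hp1 hp2
    rw [Real.dist_eq] at hp2
    rw [abs_lt] at hp1 hp2
    simp only [Set.mem_setOf_eq, abs_lt]
    constructor <;> linarith [hp1.1, hp1.2, hp2.1, hp2.2]
  obtain ⟨A, hA, B, hB, hAB⟩ := mem_prod_iff.1 key
  filter_upwards [hA] with n hn x hx
  exact hAB (Set.mk_mem_prod hn (subset_of_mem_nhdsSet hB hx))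
end

section
/- Let (T,d) be a locally compact, separable metric space and let μ be a finite Borel measure on T whose support is contained in a compact subset of T. Suppose f_n ∈ ℓ∞_loc(T) hypi-converges to f ∈ ℓ∞_loc(T) and f is continuous at μ-almost every point of T. Then for every p ∈ [1,∞): (1) ∫ |f_{n,∨} − f_{n,∧}|^p dμ → 0 as n → ∞; and (2) for any Borel measurable functions f_n^* and f^* on T with f_{n,∧} ≤ f_n^* ≤ f_{n,∨} and f_∧ ≤ f^* ≤ f_∨, one has ∫ |f_n^* − f^*|^p dμ → 0 as n → ∞. -/
open Filter Topology Metric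

variable {T : Type*}

open MeasureTheory


theorem uscHull_le_of_ball [MetricSpace T] (g : T → ℝ) (x : T) (b δ : ℝ) (hδ : 0 < δ)
    (h : ∀ y ∈ ball x δ, g y ≤ b) : uscHull g x ≤ (b : EReal) := by
  unfold uscHull
  refine iInf₂_le_of_le δ hδ ?_
  exact iSup₂_le fun y hy => EReal.coe_le_coe_iff.2 (h y hy)

theorem le_lscHull_of_ball [MetricSpace T] (g : T → ℝ) (x : T) (a δ : ℝ) (hδ : 0 < δ)
    (h : ∀ y ∈ ball x δ, a ≤ g y) : (a : EReal) ≤ lscHull g x := by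
  unfold lscHull
  refine le_iSup₂_of_le δ hδ ?_
  exact le_iInf₂ fun y hy => EReal.coe_le_coe_iff.2 (h y hy)

theorem lscHull_le_self [MetricSpace T] (g : T → ℝ) (x : T) : lscHull g x ≤ (g x : EReal) := by
  unfold lscHull
  exact iSup₂_le fun ε hε => iInf₂_le x (mem_ball_self hε)

theorem self_le_uscHull [MetricSpace T] (g : T → ℝ) (x : T) : (g x : EReal) ≤ uscHull g x := by
  unfold uscHull
  exact le_iInf₂ fun ε hε => le_iSup₂ (f := fun y (_ : y ∈ ball x ε) => (g y : EReal))
    x (mem_ball_self hε)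

theorem usc_uscHull [MetricSpace T] (g : T → ℝ) : UpperSemicontinuous (uscHull g) := by
  intro x b hb
  unfold uscHull at hb
  simp only [iInf_lt_iff] at hb
  obtain ⟨ε, hε, h⟩ := hb
  filter_upwards [ball_mem_nhds x (half_pos hε)] with y hy
  refine lt_of_le_of_lt ?_ h
  refine iInf₂_le_of_le (ε / 2) (half_pos hε) ?_
  refine iSup₂_le fun z hz => ?_
  refine le_iSup₂ (f := fun y (_ : y ∈ ball x ε) => (g y : EReal)) z ?_
  rw [mem_ball] at *
  linarith [dist_triangle z y x]

theorem lsc_lscHull [MetricSpace T] (g : T → ℝ) : LowerSemicontinuous (lscHull g) := by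
  intro x b hb
  unfold lscHull at hb
  simp only [lt_iSup_iff] at hb
  obtain ⟨ε, hε, h⟩ := hb
  filter_upwards [ball_mem_nhds x (half_pos hε)] with y hy
  refine lt_of_lt_of_le h ?_
  refine le_iSup₂_of_le (ε / 2) (half_pos hε) ?_
  refine le_iInf₂ fun z hz => ?_
  refine iInf₂_le (f := fun y (_ : y ∈ ball x ε) => (g y : EReal)) z ?_
  rw [mem_ball] at *
  linarith [dist_triangle z y x]

/-- Sequences violating a property infinitely often, near x. -/
theorem exists_seq_of_freq [MetricSpace T] (x : T) (Q : ℕ → T → Prop)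
    (h : ∀ δ > 0, ∃ᶠ n in atTop, ∃ y ∈ ball x δ, Q n y) :
    ∃ u : ℕ → T, Tendsto u atTop (𝓝 x) ∧ ∃ᶠ n in atTop, Q n (u n) := by
  obtain ⟨φ, hφ, hP⟩ := extraction_forall_of_frequently
    (P := fun k n => ∃ y ∈ ball x (1 / ((k : ℝ) + 1)), Q n y)
    (fun k => h _ Nat.one_div_pos_of_nat)
  choose y hy hQ using hP
  refine ⟨Function.extend φ y (fun _ => x), ?_, ?_⟩
  · rw [Metric.tendsto_atTop]
    intro ε hε
    obtain ⟨K, hK⟩ := exists_nat_one_div_lt hε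
    refine ⟨φ K, fun n hn => ?_⟩
    by_cases hex : ∃ k, φ k = n
    · obtain ⟨k, rfl⟩ := hex
      rw [hφ.injective.extend_apply]
      have hk : K ≤ k := hφ.le_iff_le.1 hn
      refine lt_trans (lt_of_lt_of_le (hy k) ?_) hK
      exact Nat.one_div_le_one_div hk
    · rw [Function.extend_apply' _ _ _ hex]
      simpa using hε
  · rw [frequently_atTop]
    intro N
    refine ⟨φ N, hφ.id_le N, ?_⟩
    rw [hφ.injective.extend_apply]
    exact hQ N

theorem hypi_local [MetricSpace T] (F : ℕ → T → ℝ) (f : T → ℝ) (hh : HypiConv F f)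
    (x : T) (a b : ℝ) (ha : (a : EReal) < lscHull f x) (hb : uscHull f x < (b : EReal)) :
    ∃ s ∈ 𝓝 x, ∀ᶠ n in atTop, ∀ y ∈ s,
      (a : EReal) ≤ lscHull (F n) y ∧ uscHull (F n) y ≤ (b : EReal) := by
  obtain ⟨h1, -, h3, -⟩ := hh x
  have A : ∃ δ > 0, ∀ᶠ n in atTop, ∀ y ∈ ball x δ, a ≤ F n y := by
    by_contra hcon
    push Not at hcon
    obtain ⟨u, hu, hQ⟩ := exists_seq_of_freq x (fun n y => F n y < a) hcon
    have h5 : liminf (fun n => ((F n (u n) : ℝ) : EReal)) atTop ≤ (a : EReal) :=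
      liminf_le_of_frequently_le (hQ.mono fun n hn => EReal.coe_le_coe_iff.2 hn.le)
    exact absurd ((h1 u hu).trans h5) (not_le.2 ha)
  have B : ∃ δ > 0, ∀ᶠ n in atTop, ∀ y ∈ ball x δ, F n y ≤ b := by
    by_contra hcon
    push Not at hcon
    obtain ⟨u, hu, hQ⟩ := exists_seq_of_freq x (fun n y => b < F n y) hcon
    have h5 : (b : EReal) ≤ limsup (fun n => ((F n (u n) : ℝ) : EReal)) atTop :=
      le_limsup_of_frequently_le (hQ.mono fun n hn => EReal.coe_le_coe_iff.2 hn.le)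
    exact absurd (h5.trans (h3 u hu)) (not_le.2 hb)
  obtain ⟨d1, hd1, A⟩ := A
  obtain ⟨d2, hd2, B⟩ := B
  refine ⟨ball x (d1 / 2) ∩ ball x (d2 / 2),
    inter_mem (ball_mem_nhds _ (half_pos hd1)) (ball_mem_nhds _ (half_pos hd2)), ?_⟩
  filter_upwards [A, B] with n hA hB y hy
  constructor
  · refine le_lscHull_of_ball _ _ _ (d1 / 2) (half_pos hd1) fun z hz => hA z ?_
    have := hy.1
    rw [mem_ball] at *
    linarith [dist_triangle z y x]
  · refine uscHull_le_of_ball _ _ _ (d2 / 2) (half_pos hd2) fun z hz => hB z ?_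
    have := hy.2
    rw [mem_ball] at *
    linarith [dist_triangle z y x]

theorem hypi_bound [MetricSpace T] [LocallyCompactSpace T] (F : ℕ → T → ℝ) (f : T → ℝ)
    (hh : HypiConv F f) (hf : LocBounded f) (K : Set T) (hK : IsCompact K) :
    ∃ M : ℝ, ∀ᶠ n in atTop, ∀ y ∈ K,
      ((-M : ℝ) : EReal) ≤ lscHull (F n) y ∧ uscHull (F n) y ≤ (M : EReal) := by
  refine hK.induction_on (p := fun K => ∃ M : ℝ, ∀ᶠ n in atTop, ∀ y ∈ K,
      ((-M : ℝ) : EReal) ≤ lscHull (F n) y ∧ uscHull (F n) y ≤ (M : EReal)) ?_ ?_ ?_ ?_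
  · exact ⟨0, by simp⟩
  · rintro s t hst ⟨M, hM⟩
    exact ⟨M, hM.mono fun n hn y hy => hn y (hst hy)⟩
  · rintro s t ⟨M, hM⟩ ⟨M', hM'⟩
    refine ⟨max M M', ?_⟩
    filter_upwards [hM, hM'] with n h h' y hy
    have e1 : ((-max M M' : ℝ) : EReal) ≤ ((-M : ℝ) : EReal) :=
      EReal.coe_le_coe_iff.2 (neg_le_neg (le_max_left _ _))
    have e2 : ((-max M M' : ℝ) : EReal) ≤ ((-M' : ℝ) : EReal) :=
      EReal.coe_le_coe_iff.2 (neg_le_neg (le_max_right _ _))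
    have e3 : (M : EReal) ≤ ((max M M' : ℝ) : EReal) := EReal.coe_le_coe_iff.2 (le_max_left _ _)
    have e4 : (M' : EReal) ≤ ((max M M' : ℝ) : EReal) := EReal.coe_le_coe_iff.2 (le_max_right _ _)
    rcases hy with hy | hy
    · exact ⟨e1.trans (h y hy).1, (h y hy).2.trans e3⟩
    · exact ⟨e2.trans (h' y hy).1, (h' y hy).2.trans e4⟩
  · intro x _
    obtain ⟨C, hC, hCx⟩ := exists_compact_mem_nhds x
    obtain ⟨M, hM⟩ := hf C hC
    obtain ⟨δ, hδ, hδC⟩ := Metric.mem_nhds_iff.1 hCx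
    have u1 := uscHull_le_of_ball f x M δ hδ fun y hy => (abs_le.1 (hM y (hδC hy))).2
    have l1 := le_lscHull_of_ball f x (-M) δ hδ fun y hy => (abs_le.1 (hM y (hδC hy))).1
    obtain ⟨s, hs, h⟩ := hypi_local F f hh x (-(M + 1)) (M + 1)
      (lt_of_lt_of_le (EReal.coe_lt_coe_iff.2 (by linarith)) l1)
      (lt_of_le_of_lt u1 (EReal.coe_lt_coe_iff.2 (by linarith)))
    exact ⟨s, mem_nhdsWithin_of_mem_nhds hs, M + 1, h⟩

theorem hypi_cont [MetricSpace T] (F : ℕ → T → ℝ) (f : T → ℝ) (hh : HypiConv F f)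
    (x : T) (hx : ContinuousAt f x) (ε : ℝ) (hε : 0 < ε) :
    ∀ᶠ n in atTop, ((f x - ε : ℝ) : EReal) ≤ lscHull (F n) x ∧
      uscHull (F n) x ≤ ((f x + ε : ℝ) : EReal) := by
  obtain ⟨δ, hδ, h⟩ := Metric.continuousAt_iff.1 hx (ε / 2) (half_pos hε)
  have u1 := uscHull_le_of_ball f x (f x + ε / 2) δ hδ fun y hy => by
    have := h hy; rw [Real.dist_eq, abs_lt] at this; linarith
  have l1 := le_lscHull_of_ball f x (f x - ε / 2) δ hδ fun y hy => by
    have := h hy; rw [Real.dist_eq, abs_lt] at this; linarith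
  obtain ⟨s, hs, h⟩ := hypi_local F f hh x (f x - ε) (f x + ε)
      (lt_of_lt_of_le (EReal.coe_lt_coe_iff.2 (by linarith)) l1)
      (lt_of_le_of_lt u1 (EReal.coe_lt_coe_iff.2 (by linarith)))
  exact h.mono fun n hn => hn x (mem_of_mem_nhds hs)

theorem between_eq [MetricSpace T] (f : T → ℝ)
    (x : T) (hx : ContinuousAt f x) (c : ℝ) (h1 : lscHull f x ≤ (c : EReal))
    (h2 : (c : EReal) ≤ uscHull f x) : c = f x := by
  have key : ∀ ε > 0, f x - ε ≤ c ∧ c ≤ f x + ε := by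
    intro ε hε
    obtain ⟨δ, hδ, h⟩ := Metric.continuousAt_iff.1 hx ε hε
    have u1 := uscHull_le_of_ball f x (f x + ε) δ hδ fun y hy => by
      have := h hy; rw [Real.dist_eq, abs_lt] at this; linarith
    have l1 := le_lscHull_of_ball f x (f x - ε) δ hδ fun y hy => by
      have := h hy; rw [Real.dist_eq, abs_lt] at this; linarith
    exact ⟨EReal.coe_le_coe_iff.1 (l1.trans h1), EReal.coe_le_coe_iff.1 (h2.trans u1)⟩
  apply le_antisymm
  · exact le_of_forall_pos_le_add fun ε hε => (key ε hε).2
  · exact le_of_forall_pos_le_add fun ε hε => by linarith [(key ε hε).1]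

theorem toReal_bounds [MetricSpace T] (g : T → ℝ) (x : T) (a b : ℝ)
    (h : (a : EReal) ≤ lscHull g x ∧ uscHull g x ≤ (b : EReal)) :
    a ≤ (lscHull g x).toReal ∧ (lscHull g x).toReal ≤ (uscHull g x).toReal ∧
      (uscHull g x).toReal ≤ b := by
  have h1 := lscHull_le_self g x
  have h2 := self_le_uscHull g x
  have ht : uscHull g x ≠ ⊤ := (lt_of_le_of_lt h.2 (EReal.coe_lt_top b)).ne
  have hb : lscHull g x ≠ ⊥ := (lt_of_lt_of_le (EReal.bot_lt_coe a) h.1).ne'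
  have ht' : lscHull g x ≠ ⊤ := (lt_of_le_of_lt h1 (EReal.coe_lt_top _)).ne
  have hb' : uscHull g x ≠ ⊥ := (lt_of_lt_of_le (EReal.bot_lt_coe _) h2).ne'
  refine ⟨?_, EReal.toReal_le_toReal (h1.trans h2) hb ht, ?_⟩
  · simpa using EReal.toReal_le_toReal h.1 (EReal.coe_ne_bot a) ht'
  · simpa using EReal.toReal_le_toReal h.2 hb' (EReal.coe_ne_top b)

theorem dom_conv_aux [MeasurableSpace T] (μ : Measure T) [IsFiniteMeasure μ]
    (G : ℕ → T → ℝ) (hG : ∀ n, Measurable (G n)) (p : ℝ) (hp : 1 ≤ p) (C : ℝ)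
    (hC : ∀ᶠ n in atTop, ∀ᵐ x ∂μ, |G n x| ≤ C)
    (hlim : ∀ᵐ x ∂μ, Tendsto (fun n => G n x) atTop (𝓝 0)) :
    Tendsto (fun n => ∫ x, |G n x| ^ p ∂μ) atTop (𝓝 0) := by
  have hp0 : 0 < p := by linarith
  have key := tendsto_integral_filter_of_dominated_convergence (μ := μ) (l := atTop)
    (F := fun n x => |G n x| ^ p) (f := fun _ => (0 : ℝ)) (fun _ => C ^ p) ?_ ?_ ?_ ?_
  · simpa using key
  · refine Eventually.of_forall fun n => Measurable.aestronglyMeasurable ?_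
    have : Measurable fun x => |G n x| := by
      simpa [Real.norm_eq_abs] using (hG n).norm
    exact this.pow_const p
  · filter_upwards [hC] with n hn
    filter_upwards [hn] with x hx
    rw [Real.norm_eq_abs, abs_of_nonneg (Real.rpow_nonneg (abs_nonneg _) _)]
    exact Real.rpow_le_rpow (abs_nonneg _) hx hp0.le
  · exact integrable_const _
  · filter_upwards [hlim] with x hx
    have h1 : Tendsto (fun n => |G n x|) atTop (𝓝 0) := by simpa using hx.abs
    have := h1.rpow_const (p := p) (Or.inr hp0.le)
    simpa [Real.zero_rpow hp0.ne'] using this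

/-- STATEMENT 3: hypi-convergence implies `L^p` convergence with respect to a finite
Borel measure supported on a compact set, provided the limit is continuous almost
everywhere. -/
theorem stmt3 [MetricSpace T] [LocallyCompactSpace T] [TopologicalSpace.SeparableSpace T]
    [MeasurableSpace T] [BorelSpace T]
    (μ : Measure T) [IsFiniteMeasure μ]
    (hsupp : ∃ K : Set T, IsCompact K ∧ μ Kᶜ = 0)
    (F : ℕ → T → ℝ) (f : T → ℝ)
    (hF : ∀ n, LocBounded (F n)) (hf : LocBounded f)
    (hhypi : HypiConv F f)
    (hcont : ∀ᵐ x ∂μ, ContinuousAt f x)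
    (p : ℝ) (hp : 1 ≤ p) :
    Tendsto (fun n => ∫ x, |(uscHull (F n) x).toReal - (lscHull (F n) x).toReal| ^ p ∂μ)
        atTop (𝓝 0) ∧
    ∀ (Fs : ℕ → T → ℝ) (fs : T → ℝ),
      (∀ n, Measurable (Fs n)) → Measurable fs →
      (∀ n x, lscHull (F n) x ≤ (Fs n x : EReal) ∧ (Fs n x : EReal) ≤ uscHull (F n) x) →
      (∀ x, lscHull f x ≤ (fs x : EReal) ∧ (fs x : EReal) ≤ uscHull f x) →
      Tendsto (fun n => ∫ x, |Fs n x - fs x| ^ p ∂μ) atTop (𝓝 0) := by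
  obtain ⟨K, hK, hμK⟩ := hsupp
  have hKae : ∀ᵐ x ∂μ, x ∈ K := by
    rw [ae_iff]; exact hμK
  obtain ⟨M, hM⟩ := hypi_bound F f hhypi hf K hK
  obtain ⟨M', hM'⟩ := hf K hK
  constructor
  · refine dom_conv_aux μ (fun n x => (uscHull (F n) x).toReal - (lscHull (F n) x).toReal)
      ?_ p hp (2 * M) ?_ ?_
    · intro n
      exact (usc_uscHull (F n)).measurable.ereal_toReal.sub
        (lsc_lscHull (F n)).measurable.ereal_toReal
    · filter_upwards [hM] with n hn
      filter_upwards [hKae] with x hx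
      obtain ⟨h1, h2, h3⟩ := toReal_bounds (F n) x _ _ (hn x hx)
      rw [abs_le]; constructor <;> linarith
    · filter_upwards [hcont] with x hx
      rw [Metric.tendsto_atTop']
      intro ε hε
      obtain ⟨N, hN⟩ := eventually_atTop.1 (hypi_cont F f hhypi x hx (ε / 3) (by positivity))
      refine ⟨N, fun n hn => ?_⟩
      obtain ⟨h1, h2, h3⟩ := toReal_bounds (F n) x _ _ (hN n hn.le)
      rw [Real.dist_eq, sub_zero, abs_lt]; constructor <;> linarith
  · intro Fs fs hFs hfs hb hb'
    refine dom_conv_aux μ (fun n x => Fs n x - fs x) ?_ p hp (M + M') ?_ ?_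
    · exact fun n => (hFs n).sub hfs
    · filter_upwards [hM] with n hn
      filter_upwards [hKae, hcont] with x hx hc
      have e := between_eq f x hc (fs x) (hb' x).1 (hb' x).2
      have h1 := EReal.coe_le_coe_iff.1 ((hn x hx).1.trans (hb n x).1)
      have h2 := EReal.coe_le_coe_iff.1 ((hb n x).2.trans (hn x hx).2)
      have h3 := abs_le.1 (hM' x hx)
      rw [abs_le, e]; constructor <;> linarith
    · filter_upwards [hcont] with x hx
      have e := between_eq f x hx (fs x) (hb' x).1 (hb' x).2
      rw [Metric.tendsto_atTop']
      intro ε hε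
      obtain ⟨N, hN⟩ := eventually_atTop.1 (hypi_cont F f hhypi x hx (ε / 3) (by positivity))
      refine ⟨N, fun n hn => ?_⟩
      have h1 := EReal.coe_le_coe_iff.1 ((hN n hn.le).1.trans (hb n x).1)
      have h2 := EReal.coe_le_coe_iff.1 ((hb n x).2.trans (hN n hn.le).2)
      rw [Real.dist_eq, sub_zero, abs_lt, e]; constructor <;> linarith
end

section
/- Let (T,d) be a locally compact, separable metric space. If f_n ∈ ℓ∞_loc(T) hypi-converges to f ∈ ℓ∞_loc(T), if g_n ∈ ℓ∞_loc(T) hypi-converges to g ∈ ℓ∞_loc(T), and if at every point x ∈ T at least one of the two functions f and g is continuous at x, then f_n + g_n hypi-converges to f + g. -/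
open Filter Topology Metric

variable {T : Type*}

lemma lscHull_eq_liminf [MetricSpace T] (f : T → ℝ) (x : T) :
    lscHull f x = liminf (fun y => (f y : EReal)) (𝓝 x) :=
  (Metric.nhds_basis_ball.liminf_eq_iSup_iInf).symm

lemma uscHull_eq_limsup [MetricSpace T] (f : T → ℝ) (x : T) :
    uscHull f x = limsup (fun y => (f y : EReal)) (𝓝 x) :=
  (Metric.nhds_basis_ball.limsup_eq_iInf_iSup).symm

lemma liminf_add_tendsto {α : Type*} {l : Filter α} [l.NeBot] {A B : α → ℝ} {a : ℝ}
    (h : Tendsto A l (𝓝 a)) :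
    liminf (fun y => ((A y + B y : ℝ) : EReal)) l
      = (a : EReal) + liminf (fun y => (B y : EReal)) l := by
  have h' : Tendsto (fun y => (A y : EReal)) l (𝓝 (a : EReal)) :=
    (continuous_coe_real_ereal.tendsto a).comp h
  have e : (fun y => ((A y + B y : ℝ) : EReal))
      = (fun y => (A y : EReal)) + fun y => (B y : EReal) := by
    funext y; simp
  rw [e]
  apply le_antisymm
  · have := EReal.liminf_add_le (f := l) (u := fun y => (A y : EReal))
      (v := fun y => (B y : EReal)) (by simp [h'.limsup_eq]) (by simp [h'.limsup_eq])
    rwa [h'.limsup_eq] at this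
  · have := EReal.le_liminf_add (f := l) (u := fun y => (A y : EReal))
      (v := fun y => (B y : EReal)) 
    rwa [h'.liminf_eq] at this

lemma limsup_add_tendsto {α : Type*} {l : Filter α} [l.NeBot] {A B : α → ℝ} {a : ℝ}
    (h : Tendsto A l (𝓝 a)) :
    limsup (fun y => ((A y + B y : ℝ) : EReal)) l
      = (a : EReal) + limsup (fun y => (B y : EReal)) l := by
  have h' : Tendsto (fun y => (A y : EReal)) l (𝓝 (a : EReal)) :=
    (continuous_coe_real_ereal.tendsto a).comp h
  have e : (fun y => ((A y + B y : ℝ) : EReal))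
      = (fun y => (A y : EReal)) + fun y => (B y : EReal) := by
    funext y; simp
  rw [e]
  apply le_antisymm
  · have := EReal.limsup_add_le (f := l) (u := fun y => (A y : EReal))
      (v := fun y => (B y : EReal)) (by simp [h'.limsup_eq]) (by simp [h'.limsup_eq])
    rwa [h'.limsup_eq] at this
  · have := EReal.le_limsup_add (f := l) (u := fun y => (B y : EReal))
      (v := fun y => (A y : EReal))
    rw [h'.liminf_eq] at this
    rwa [add_comm, add_comm (fun y => (A y : EReal))]

lemma hypi_aux [MetricSpace T] {F G : ℕ → T → ℝ} {f g : T → ℝ}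
    (hFf : HypiConv F f) (hGg : HypiConv G g) {x : T} (hc : ContinuousAt f x) :
    (∀ u : ℕ → T, Tendsto u atTop (𝓝 x) →
      lscHull (fun y => f y + g y) x
        ≤ liminf (fun n => ((F n (u n) + G n (u n) : ℝ) : EReal)) atTop) ∧
    (∃ u : ℕ → T, Tendsto u atTop (𝓝 x) ∧
      limsup (fun n => ((F n (u n) + G n (u n) : ℝ) : EReal)) atTop
        ≤ lscHull (fun y => f y + g y) x) ∧
    (∀ u : ℕ → T, Tendsto u atTop (𝓝 x) →
      limsup (fun n => ((F n (u n) + G n (u n) : ℝ) : EReal)) atTop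
        ≤ uscHull (fun y => f y + g y) x) ∧
    (∃ u : ℕ → T, Tendsto u atTop (𝓝 x) ∧
      uscHull (fun y => f y + g y) x
        ≤ liminf (fun n => ((F n (u n) + G n (u n) : ℝ) : EReal)) atTop) := by
  have hc' : Tendsto (fun y => (f y : EReal)) (𝓝 x) (𝓝 (f x : EReal)) :=
    (continuous_coe_real_ereal.tendsto (f x)).comp hc
  have key : ∀ u : ℕ → T, Tendsto u atTop (𝓝 x) →
      Tendsto (fun n => F n (u n)) atTop (𝓝 (f x)) := by
    intro u hu
    have h1 := (hFf x).1 u hu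
    have h2 := (hFf x).2.2.1 u hu
    rw [lscHull_eq_liminf, hc'.liminf_eq] at h1
    rw [uscHull_eq_limsup, hc'.limsup_eq] at h2
    exact EReal.tendsto_coe.1 (tendsto_of_le_liminf_of_limsup_le h1 h2)
  have el : lscHull (fun y => f y + g y) x = (f x : EReal) + lscHull g x := by
    rw [lscHull_eq_liminf, lscHull_eq_liminf, liminf_add_tendsto hc]
  have eu : uscHull (fun y => f y + g y) x = (f x : EReal) + uscHull g x := by
    rw [uscHull_eq_limsup, uscHull_eq_limsup, limsup_add_tendsto hc]
  rw [el, eu]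
  obtain ⟨a, ⟨ub, hub, b⟩, c, ⟨ud, hud, d⟩⟩ := hGg x
  refine ⟨fun u hu => ?_, ⟨ub, hub, ?_⟩, fun u hu => ?_, ⟨ud, hud, ?_⟩⟩
  · rw [liminf_add_tendsto (key u hu)]
    exact add_le_add_right (a u hu) _
  · rw [limsup_add_tendsto (key ub hub)]
    exact add_le_add_right b _
  · rw [limsup_add_tendsto (key u hu)]
    exact add_le_add_right (c u hu) _
  · rw [liminf_add_tendsto (key ud hud)]
    exact add_le_add_right d _

/-- STATEMENT 7 (Hypi-convergence of sums): if `f_n` hypi-converges to `f`, `g_n`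
hypi-converges to `g`, and at every point at least one of `f`, `g` is continuous,
then `f_n + g_n` hypi-converges to `f + g`. -/
theorem stmt7 [MetricSpace T] [LocallyCompactSpace T] [TopologicalSpace.SeparableSpace T]
    (F G : ℕ → T → ℝ) (f g : T → ℝ)
    (hF : ∀ n, LocBounded (F n)) (hG : ∀ n, LocBounded (G n))
    (hf : LocBounded f) (hg : LocBounded g)
    (hFf : HypiConv F f) (hGg : HypiConv G g)
    (hcont : ∀ x : T, ContinuousAt f x ∨ ContinuousAt g x) :
    HypiConv (fun n y => F n y + G n y) (fun y => f y + g y) := by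
  intro x
  rcases hcont x with h | h
  · exact hypi_aux hFf hGg h
  · have := hypi_aux hGg hFf h
    simpa only [add_comm] using this
end

section
/- Let (T,d) be a metric space, let E ⊆ A ⊆ T with E dense in T, and let f : A → ℝ be continuous. Let f|_E denote the restriction of f to E. Then (f|_E)_∧^{E:T} = f_∧^{A:T} and (f|_E)_∨^{E:T} = f_∨^{A:T} as functions on T. -/
open Filter Topology Metric

variable {T : Type*}

/-- Lower semicontinuous extension to `T` of a function defined (at least) on `A`:
`f_∧^{A:T}(x) = sup_{ε>0} inf f(B(x,ε) ∩ A)`, with values in the extended reals. -/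
noncomputable def lscExt [MetricSpace T] (A : Set T) (f : T → ℝ) (x : T) : EReal :=
  ⨆ (ε : ℝ) (_ : 0 < ε), ⨅ (y : T) (_ : y ∈ Metric.ball x ε ∩ A), (f y : EReal)

/-- Upper semicontinuous extension to `T` of a function defined (at least) on `A`:
`f_∨^{A:T}(x) = inf_{ε>0} sup f(B(x,ε) ∩ A)`. -/
noncomputable def uscExt [MetricSpace T] (A : Set T) (f : T → ℝ) (x : T) : EReal :=
  ⨅ (ε : ℝ) (_ : 0 < ε), ⨆ (y : T) (_ : y ∈ Metric.ball x ε ∩ A), (f y : EReal)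

/-- STATEMENT 8: if `E ⊆ A ⊆ T` with `E` dense in `T` and `f` is continuous on `A`,
then the semicontinuous extensions of `f|_E` and of `f` to `T` coincide. -/
theorem stmt8 [MetricSpace T] (E A : Set T) (hEA : E ⊆ A) (hE : Dense E)
    (f : T → ℝ) (hf : ContinuousOn f A) :
    (∀ x : T, lscExt E f x = lscExt A f x) ∧
    (∀ x : T, uscExt E f x = uscExt A f x) := by
  have key : ∀ (x : T) (ε : ℝ) (y : T), y ∈ Metric.ball x ε ∩ A →
      (𝓝[Metric.ball x ε ∩ E] y).NeBot ∧
      Tendsto (fun z => (f z : EReal)) (𝓝[Metric.ball x ε ∩ E] y) (𝓝 (f y : EReal)) := by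
    intro x ε y hy
    constructor
    · rw [← mem_closure_iff_nhdsWithin_neBot]
      exact hE.open_subset_closure_inter Metric.isOpen_ball hy.1
    · have h := (hf y hy.2).mono (Set.inter_subset_right.trans hEA : Metric.ball x ε ∩ E ⊆ A)
      exact (continuous_coe_real_ereal.tendsto (f y)).comp h
  constructor
  · intro x
    unfold lscExt
    refine iSup_congr fun ε => iSup_congr fun _ => le_antisymm ?_ ?_
    · refine le_iInf₂ fun y hy => ?_
      obtain ⟨h1, h2⟩ := key x ε y hy
      refine ge_of_tendsto h2 ?_
      filter_upwards [self_mem_nhdsWithin] with z hz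
      exact iInf₂_le z hz
    · exact le_iInf₂ fun y hy => iInf₂_le y ⟨hy.1, hEA hy.2⟩
  · intro x
    unfold uscExt
    refine iInf_congr fun ε => iInf_congr fun _ => le_antisymm ?_ ?_
    · exact iSup₂_le fun y hy =>
        le_iSup₂ (f := fun (y : T) (_ : y ∈ Metric.ball x ε ∩ A) => (f y : EReal))
          y ⟨hy.1, hEA hy.2⟩
    · refine iSup₂_le fun y hy => ?_
      obtain ⟨h1, h2⟩ := key x ε y hy
      refine le_of_tendsto h2 ?_
      filter_upwards [self_mem_nhdsWithin] with z hz
      exact le_iSup₂ (f := fun (y : T) (_ : y ∈ Metric.ball x ε ∩ E) => (f y : EReal)) z hz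
end

section
/- Let (T,d) be a metric space, let A ⊆ T be dense, let f : A → ℝ be continuous, and suppose that the extensions f_∧^{A:T} and f_∨^{A:T} are real-valued. Let f* : T → ℝ satisfy f_∧^{A:T} ≤ f* ≤ f_∨^{A:T} on T. Then f_∧^{A:T} = (f*)_∧ and f_∨^{A:T} = (f*)_∨ on T. Moreover, if functions f_n : T → ℝ are locally bounded and satisfy, for every x ∈ T and every sequence x_n → x, f_∧^{A:T}(x) ≤ liminf_n f_n(x_n) ≤ limsup_n f_n(x_n) ≤ f_∨^{A:T}(x), then f_n hypi-converges to f*. -/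
open Filter Topology Metric

variable {T : Type*}

theorem aux_diag {T : Type*} [MetricSpace T] (A : Set T) (f : T → ℝ) (F : ℕ → T → ℝ) (x : T) (L : ℝ)
    (h1 : ∀ ε > 0, ∃ a ∈ A, dist a x < ε ∧ f a < L + ε)
    (h2 : ∀ a ∈ A, Tendsto (fun n => F n a) atTop (𝓝 (f a))) :
    ∃ u : ℕ → T, Tendsto u atTop (𝓝 x) ∧ ∀ ε > 0, ∀ᶠ n in atTop, F n (u n) < L + ε := by
  classical
  let P : ℕ → ℕ → Prop := fun n k =>
    ∃ y, dist y x < 1 / ((k : ℝ) + 1) ∧ F n y < L + 1 / ((k : ℝ) + 1)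
  have hP : ∀ k, ∀ᶠ n in atTop, P n k := by
    intro k
    obtain ⟨a, ha, hd, hl⟩ := h1 (1 / ((k : ℝ) + 1)) (by positivity)
    filter_upwards [(h2 a ha).eventually (gt_mem_nhds hl)] with n hn
    exact ⟨a, hd, hn⟩
  let k : ℕ → ℕ := fun n => Nat.findGreatest (P n) n
  have hk : ∀ ε > 0, ∀ᶠ n in atTop, 1 / ((k n : ℝ) + 1) < ε := by
    intro ε hε
    obtain ⟨K, hK⟩ := exists_nat_one_div_lt hε
    filter_upwards [hP K, eventually_ge_atTop K] with n hn hKn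
    have h3 : K ≤ k n := Nat.le_findGreatest hKn hn
    have h4 : (K : ℝ) ≤ k n := by exact_mod_cast h3
    refine lt_of_le_of_lt ?_ hK
    gcongr
  have hu : ∀ n, ∃ y, P n (k n) → dist y x < 1 / ((k n : ℝ) + 1) ∧ F n y < L + 1 / ((k n : ℝ) + 1) := by
    intro n
    by_cases h : P n (k n)
    · obtain ⟨y, hy⟩ := h
      exact ⟨y, fun _ => hy⟩
    · exact ⟨x, fun h' => absurd h' h⟩
  choose u hu using hu
  have hPk : ∀ᶠ n in atTop, P n (k n) := by
    filter_upwards [hP 0] with n hn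
    exact Nat.findGreatest_spec (P := P n) (Nat.zero_le n) hn
  refine ⟨u, ?_, ?_⟩
  · rw [Metric.tendsto_nhds]
    intro ε hε
    filter_upwards [hPk, hk ε hε] with n h3 h4
    exact (hu n h3).1.trans h4
  · intro ε hε
    filter_upwards [hPk, hk ε hε] with n h3 h4
    have := (hu n h3).2
    linarith

theorem aux_le_lsc {T : Type*} [MetricSpace T] {A : Set T} {f : T → ℝ} (hf : ContinuousOn f A)
    {a : T} (ha : a ∈ A) : (f a : EReal) ≤ lscExt A f a := by
  refine EReal.ge_of_forall_gt_iff_ge.1 ?_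
  intro z hz
  have hz' : z < f a := by exact_mod_cast hz
  have h := (hf a ha).eventually (lt_mem_nhds hz')
  obtain ⟨ε, hε, h⟩ := Metric.mem_nhdsWithin_iff.1 h
  refine le_iSup₂_of_le ε hε (le_iInf₂ fun y hy => ?_)
  have h3 : z < f y := h hy
  exact_mod_cast h3.le

theorem aux_usc_le {T : Type*} [MetricSpace T] {A : Set T} {f : T → ℝ} (hf : ContinuousOn f A)
    {a : T} (ha : a ∈ A) : uscExt A f a ≤ (f a : EReal) := by
  refine EReal.le_of_forall_lt_iff_le.1 ?_
  intro z hz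
  have hz' : f a < z := by exact_mod_cast hz
  have h := (hf a ha).eventually (gt_mem_nhds hz')
  obtain ⟨ε, hε, h⟩ := Metric.mem_nhdsWithin_iff.1 h
  refine iInf₂_le_of_le ε hε (iSup₂_le fun y hy => ?_)
  have h3 : f y < z := h hy
  exact_mod_cast h3.le

/-- STATEMENT 10: the semicontinuous extensions of a continuous function on a dense
set coincide with the semicontinuous hulls of any function squeezed between them;
and a squeeze criterion for hypi-convergence to such a function. -/
theorem stmt10 [MetricSpace T] (A : Set T) (hA : Dense A)
    (f : T → ℝ) (hf : ContinuousOn f A)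
    (hreal : ∀ x : T, lscExt A f x ≠ ⊥ ∧ lscExt A f x ≠ ⊤ ∧
      uscExt A f x ≠ ⊥ ∧ uscExt A f x ≠ ⊤)
    (fs : T → ℝ)
    (hfs : ∀ x : T, lscExt A f x ≤ (fs x : EReal) ∧ (fs x : EReal) ≤ uscExt A f x) :
    (∀ x : T, lscExt A f x = lscHull fs x ∧ uscExt A f x = uscHull fs x) ∧
    (∀ F : ℕ → T → ℝ, (∀ n, LocBounded (F n)) →
      (∀ (x : T) (u : ℕ → T), Tendsto u atTop (𝓝 x) →
        lscExt A f x ≤ liminf (fun n => ((F n (u n) : ℝ) : EReal)) atTop ∧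
        limsup (fun n => ((F n (u n) : ℝ) : EReal)) atTop ≤ uscExt A f x) →
      HypiConv F fs) := by
  have hball : ∀ {x y : T} {ε : ℝ}, y ∈ ball x ε → ∃ δ > 0, ball y δ ⊆ ball x ε := by
    intro x y ε hy
    exact Metric.isOpen_iff.1 Metric.isOpen_ball y hy
  have hL : ∀ x, lscExt A f x = lscHull fs x := by
    intro x
    apply le_antisymm
    · refine iSup₂_le fun ε hε => le_iSup₂_of_le ε hε (le_iInf₂ fun y hy => ?_)
      obtain ⟨δ, hδ, hs⟩ := hball hy
      refine le_trans ?_ (hfs y).1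
      refine le_iSup₂_of_le δ hδ (le_iInf₂ fun z hz => ?_)
      exact iInf₂_le z ⟨hs hz.1, hz.2⟩
    · refine iSup₂_le fun ε hε => le_iSup₂_of_le ε hε (le_iInf₂ fun y hy => ?_)
      exact (iInf₂_le y hy.1).trans ((hfs y).2.trans (aux_usc_le hf hy.2))
  have hU : ∀ x, uscExt A f x = uscHull fs x := by
    intro x
    apply le_antisymm
    · refine le_iInf₂ fun ε hε => iInf₂_le_of_le ε hε (iSup₂_le fun y hy => ?_)
      exact ((aux_le_lsc hf hy.2).trans (hfs y).1).trans
        (le_iSup₂ (f := fun (y : T) (_ : y ∈ ball x ε) => (fs y : EReal)) y hy.1)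
    · refine le_iInf₂ fun ε hε => iInf₂_le_of_le ε hε (iSup₂_le fun y hy => ?_)
      obtain ⟨δ, hδ, hs⟩ := hball hy
      refine (hfs y).2.trans ?_
      refine iInf₂_le_of_le δ hδ (iSup₂_le fun z hz => ?_)
      exact le_iSup₂ (f := fun (y : T) (_ : y ∈ ball x ε ∩ A) => (f y : EReal)) z ⟨hs hz.1, hz.2⟩
  refine ⟨fun x => ⟨hL x, hU x⟩, ?_⟩
  intro F _ hF
  have hFa : ∀ a ∈ A, Tendsto (fun n => F n a) atTop (𝓝 (f a)) := by
    intro a ha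
    obtain ⟨h1, h2⟩ := hF a (fun _ => a) tendsto_const_nhds
    rw [← EReal.tendsto_coe]
    exact tendsto_of_le_liminf_of_limsup_le ((aux_le_lsc hf ha).trans h1)
      (h2.trans (aux_usc_le hf ha))
  intro x
  rw [← hL x, ← hU x]
  obtain ⟨hr1, hr2, hr3, hr4⟩ := hreal x
  refine ⟨fun u hu => (hF x u hu).1, ?_, fun u hu => (hF x u hu).2, ?_⟩
  · obtain ⟨L, hLe⟩ : ∃ L : ℝ, lscExt A f x = L := ⟨_, (EReal.coe_toReal hr2 hr1).symm⟩
    obtain ⟨u, hu, hlt⟩ := aux_diag A f F x L (by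
      intro ε hε
      by_contra! hcon
      have h3 : ((L + ε : ℝ) : EReal) ≤ lscExt A f x := by
        refine le_iSup₂_of_le ε hε (le_iInf₂ fun y hy => ?_)
        exact_mod_cast hcon y hy.2 hy.1
      rw [hLe] at h3
      have h4 : L + ε ≤ L := by exact_mod_cast h3
      linarith) hFa
    refine ⟨u, hu, ?_⟩
    rw [hLe]
    refine EReal.le_of_forall_lt_iff_le.1 ?_
    intro z hz
    have hz' : L < z := by exact_mod_cast hz
    refine limsup_le_of_le (by isBoundedDefault) ?_
    filter_upwards [hlt (z - L) (by linarith)] with n hn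
    have h5 : F n (u n) ≤ z := by linarith
    exact_mod_cast h5
  · obtain ⟨L, hLe⟩ : ∃ L : ℝ, uscExt A f x = L := ⟨_, (EReal.coe_toReal hr4 hr3).symm⟩
    obtain ⟨u, hu, hlt⟩ := aux_diag A (fun y => - f y) (fun n y => - F n y) x (-L) (by
      intro ε hε
      by_contra! hcon
      have h3 : uscExt A f x ≤ ((L - ε : ℝ) : EReal) := by
        refine iInf₂_le_of_le ε hε (iSup₂_le fun y hy => ?_)
        have h6 := hcon y hy.2 hy.1
        have h7 : f y ≤ L - ε := by linarith
        exact_mod_cast h7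
      rw [hLe] at h3
      have h4 : L ≤ L - ε := by exact_mod_cast h3
      linarith) (fun a ha => (hFa a ha).neg)
    refine ⟨u, hu, ?_⟩
    rw [hLe]
    refine EReal.ge_of_forall_gt_iff_ge.1 ?_
    intro z hz
    have hz' : z < L := by exact_mod_cast hz
    refine le_liminf_of_le (by isBoundedDefault) ?_
    filter_upwards [hlt (L - z) (by linarith)] with n hn
    have h5 : z ≤ F n (u n) := by linarith
    exact_mod_cast h5
end

section
/- Let (D,d) and (E,e) be pseudometric spaces and let g : D → E be an arbitrary function. Then the set D_g of points x ∈ D at which g is not continuous is a Borel subset of D. More generally, for every Borel set B ⊆ E, the set g^{-1}(B) \ D_g is a Borel subset of D. -/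
/-- STATEMENT 11 (Measurability): for an arbitrary map `g` between pseudometric
spaces, the set of discontinuity points of `g` is Borel, and for every Borel set
`B` in the codomain, `g ⁻¹' B \ D_g` is Borel. -/
theorem stmt11 {D E : Type*} [PseudoMetricSpace D] [PseudoMetricSpace E]
    [MeasurableSpace D] [BorelSpace D] [MeasurableSpace E] [BorelSpace E]
    (g : D → E) :
    MeasurableSet {x : D | ¬ ContinuousAt g x} ∧
    ∀ B : Set E, MeasurableSet B →
      MeasurableSet (g ⁻¹' B \ {x : D | ¬ ContinuousAt g x}) := by
  have hC : MeasurableSet {x : D | ContinuousAt g x} :=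
    (IsGδ.setOfPred_continuousAt g).measurableSet
  refine ⟨hC.compl, fun B hB => ?_⟩
  have hcont : Continuous (fun x : {x : D | ContinuousAt g x} => g x) := by
    rw [continuous_iff_continuousAt]
    intro x
    have hx : ContinuousAt g (x : D) := x.2
    exact ContinuousAt.comp (f := Subtype.val) hx continuous_subtype_val.continuousAt
  have h := hC.subtype_image (hcont.measurable hB)
  convert h using 1
  ext x
  constructor
  · rintro ⟨h1, h2⟩
    exact ⟨⟨x, not_not.mp h2⟩, h1, rfl⟩
  · rintro ⟨y, hy, rfl⟩
    exact ⟨hy, fun hn => hn y.2⟩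
end

section
/- Let (D,d) be a pseudometric space and (E,e) a metric space. For each integer n ≥ 0 let D_n ⊆ D and g_n : D_n → E. Assume that for every x_0 ∈ D_0, every strictly increasing sequence (n_k) of positive integers, and every choice of points x_{n_k} ∈ D_{n_k} with x_{n_k} → x_0 in D, one has g_{n_k}(x_{n_k}) → g_0(x_0) in E. Define D_∞ = ⋂_{k≥1} cl(⋃_{m≥k} D_m), the set of limits of subsequences of points from the D_n. Then the restriction of g_0 to D_0 ∩ D_∞ is continuous (with respect to the subspace topology induced by d). -/
open Filter Topology

/-- STATEMENT 12 (Addendum to the extended continuous mapping theorem): if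
`g_{n_k}(x_{n_k}) → g_0(x_0)` whenever `x_{n_k} ∈ D_{n_k}` converges to
`x_0 ∈ D_0` along strictly increasing sequences of positive integers, then `g_0`
is continuous on `D_0 ∩ D_∞`, where `D_∞ = ⋂_{k ≥ 1} cl(⋃_{m ≥ k} D_m)`. -/
theorem stmt12 {D E : Type*} [PseudoMetricSpace D] [MetricSpace E]
    (Dn : ℕ → Set D) (g : ℕ → D → E)
    (hconv : ∀ x0 ∈ Dn 0, ∀ φ : ℕ → ℕ, StrictMono φ → (∀ k, 0 < φ k) →
      ∀ u : ℕ → D, (∀ k, u k ∈ Dn (φ k)) → Tendsto u atTop (𝓝 x0) →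
        Tendsto (fun k => g (φ k) (u k)) atTop (𝓝 (g 0 x0))) :
    ContinuousOn (g 0)
      (Dn 0 ∩ ⋂ (k : ℕ) (_ : 1 ≤ k), closure (⋃ (m : ℕ) (_ : k ≤ m), Dn m)) := by
  have key : ∀ x0 ∈ Dn 0, ∀ η > 0, ∃ δ > 0, ∃ n : ℕ, ∀ m > n, ∀ z ∈ Dn m,
      dist z x0 < δ → dist (g m z) (g 0 x0) < η := by
    intro x0 hx0 η hη
    by_contra! hcon
    have h1 : ∀ n : ℕ, ∃ m > n, ∃ z ∈ Dn m,
        dist z x0 < 1 / ((n : ℝ) + 1) ∧ η ≤ dist (g m z) (g 0 x0) :=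
      fun n => hcon _ Nat.one_div_pos_of_nat n
    choose f hf z hz hzd hzg using h1
    let a : ℕ → ℕ := fun k => f^[k] 0
    have ha : ∀ k, a (k + 1) = f (a k) := fun k => Function.iterate_succ_apply' f k 0
    have hmono : StrictMono a := strictMono_nat_of_lt_succ (fun k => by
      rw [ha]; exact hf _)
    have hu : Tendsto (fun k => z (a k)) atTop (𝓝 x0) := by
      rw [tendsto_iff_dist_tendsto_zero]
      exact squeeze_zero (fun _ => dist_nonneg) (fun k => (hzd (a k)).le)
        (tendsto_one_div_add_atTop_nhds_zero_nat.comp hmono.tendsto_atTop)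
    have ht := hconv x0 hx0 (fun k => f (a k))
      (strictMono_nat_of_lt_succ (fun k => by
        have := hf (f (a k))
        simpa only [ha] using this))
      (fun k => lt_of_le_of_lt (Nat.zero_le _) (hf (a k)))
      (fun k => z (a k)) (fun k => hz (a k)) hu
    obtain ⟨N, hN⟩ := Metric.tendsto_atTop.1 ht η hη
    exact absurd (hN N le_rfl) (not_lt.2 (hzg (a N)))
  rw [Metric.continuousOn_iff]
  rintro x ⟨hx, -⟩ ε hε
  obtain ⟨δ, hδ, n, h⟩ := key x hx (ε / 2) (half_pos hε)
  refine ⟨δ / 2, half_pos hδ, ?_⟩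
  rintro y ⟨hy, hy'⟩ hyx
  obtain ⟨δ', hδ', n', h'⟩ := key y hy (ε / 2) (half_pos hε)
  have hcl := Set.mem_iInter₂.1 hy' (max n n' + 1) (by omega)
  obtain ⟨z, hz, hzy⟩ := Metric.mem_closure_iff.1 hcl (min (δ / 2) δ')
    (lt_min (half_pos hδ) hδ')
  obtain ⟨m, hm, hzm⟩ := Set.mem_iUnion₂.1 hz
  rw [dist_comm] at hzy
  have hz1 := lt_of_lt_of_le hzy (min_le_left _ _)
  have hz2 := lt_of_lt_of_le hzy (min_le_right _ _)
  have e1 := h m (by omega) z hzm (by linarith [dist_triangle z y x])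
  have e2 := h' m (by omega) z hzm hz2
  linarith [dist_triangle_left (g 0 y) (g 0 x) (g m z)]
end

section
/- Let (T,d) be a locally compact, separable metric space and let f_n, f ∈ ℓ∞_loc(T). If f_n converges to f locally uniformly, i.e., sup_{x∈K} |f_n(x) − f(x)| → 0 for every compact K ⊆ T, then f_n hypi-converges to f. -/
open Filter Topology Metric

variable {T : Type*}

theorem diff_tendsto_aux [MetricSpace T] [LocallyCompactSpace T]
    (F : ℕ → T → ℝ) (f : T → ℝ)
    (hunif : ∀ K : Set T, IsCompact K →
      ∀ ε > (0 : ℝ), ∀ᶠ n in atTop, ∀ x ∈ K, |F n x - f x| < ε)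
    (x : T) (u : ℕ → T) (hu : Tendsto u atTop (𝓝 x)) :
    Tendsto (fun n => ((F n (u n) - f (u n) : ℝ) : EReal)) atTop (𝓝 0) := by
  have h : Tendsto (fun n => F n (u n) - f (u n)) atTop (𝓝 0) := by
    obtain ⟨K, hK, hx⟩ := exists_compact_mem_nhds x
    rw [Metric.tendsto_nhds]
    intro ε hε
    filter_upwards [hunif K hK ε hε, hu hx] with n h1 h2
    simpa [Real.dist_eq] using h1 (u n) h2
  exact (continuous_coe_real_ereal.tendsto 0).comp h

theorem liminf_aux (a b : ℕ → ℝ)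
    (h : Tendsto (fun n => ((a n - b n : ℝ) : EReal)) atTop (𝓝 0)) :
    liminf (fun n => (b n : EReal)) atTop ≤ liminf (fun n => (a n : EReal)) atTop := by
  have e : (fun n => (a n : EReal)) =
      (fun n => (b n : EReal)) + (fun n => ((a n - b n : ℝ) : EReal)) := by
    funext n
    rw [Pi.add_apply, ← EReal.coe_add]
    congr 1
    ring
  have h2 := EReal.le_liminf_add (f := atTop) (u := fun n => (b n : EReal))
    (v := fun n => ((a n - b n : ℝ) : EReal))
  rw [h.liminf_eq, add_zero] at h2
  rw [e]
  exact h2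

theorem limsup_aux (a b : ℕ → ℝ)
    (h : Tendsto (fun n => ((a n - b n : ℝ) : EReal)) atTop (𝓝 0)) :
    limsup (fun n => (a n : EReal)) atTop ≤ limsup (fun n => (b n : EReal)) atTop := by
  have e : (fun n => (a n : EReal)) =
      (fun n => (b n : EReal)) + (fun n => ((a n - b n : ℝ) : EReal)) := by
    funext n
    rw [Pi.add_apply, ← EReal.coe_add]
    congr 1
    ring
  have h2 := EReal.limsup_add_le (f := atTop) (u := fun n => (b n : EReal))
    (v := fun n => ((a n - b n : ℝ) : EReal))
    (Or.inr (by rw [h.limsup_eq]; simp)) (Or.inr (by rw [h.limsup_eq]; simp))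
  rw [h.limsup_eq, add_zero] at h2
  rw [e]
  exact h2

theorem tendsto_aux [MetricSpace T] (x : T) (u : ℕ → T)
    (h : ∀ n : ℕ, u n ∈ Metric.ball x (1 / ((n : ℝ) + 1))) : Tendsto u atTop (𝓝 x) := by
  rw [tendsto_iff_dist_tendsto_zero]
  exact squeeze_zero (fun _ => dist_nonneg) (fun n => (h n).le)
    tendsto_one_div_add_atTop_nhds_zero_nat

/-- STATEMENT 19: locally uniform convergence implies hypi-convergence. -/
theorem stmt19 [MetricSpace T] [LocallyCompactSpace T] [TopologicalSpace.SeparableSpace T]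
    (F : ℕ → T → ℝ) (f : T → ℝ)
    (hF : ∀ n, LocBounded (F n)) (hf : LocBounded f)
    (hunif : ∀ K : Set T, IsCompact K →
      ∀ ε > (0 : ℝ), ∀ᶠ n in atTop, ∀ x ∈ K, |F n x - f x| < ε) :
    HypiConv F f := by
  intro x
  refine ⟨?_, ?_, ?_, ?_⟩
  · intro u hu
    refine le_trans ?_ (liminf_aux _ _ (diff_tendsto_aux F f hunif x u hu))
    refine iSup₂_le fun ε hε => ?_
    refine le_liminf_of_le (by isBoundedDefault) ?_
    filter_upwards [hu (Metric.ball_mem_nhds x hε)] with n hn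
    exact iInf₂_le (u n) hn
  · have hL : lscHull f x < ⊤ := by
      refine lt_of_le_of_lt (iSup₂_le fun ε hε => ?_) (EReal.coe_lt_top (f x))
      exact iInf₂_le x (Metric.mem_ball_self hε)
    obtain ⟨g, -, hg, hgt⟩ := exists_seq_strictAnti_tendsto' hL
    have hex : ∀ n : ℕ, ∃ y ∈ Metric.ball x (1 / ((n : ℝ) + 1)), (f y : EReal) < g n := by
      intro n
      have h1 : (⨅ (y : T) (_ : y ∈ Metric.ball x (1 / ((n : ℝ) + 1))), (f y : EReal)) < g n :=
        lt_of_le_of_lt (le_iSup₂ (f := fun (ε : ℝ) (_ : 0 < ε) =>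
          ⨅ (y : T) (_ : y ∈ Metric.ball x ε), (f y : EReal)) _ Nat.one_div_pos_of_nat) (hg n).1
      simpa only [iInf_lt_iff, exists_prop] using h1
    choose u hu1 hu2 using hex
    have hu := tendsto_aux x u hu1
    refine ⟨u, hu, (limsup_aux _ _ (diff_tendsto_aux F f hunif x u hu)).trans ?_⟩
    rw [← hgt.limsup_eq]
    exact limsup_le_limsup (Eventually.of_forall fun n => (hu2 n).le)
  · intro u hu
    refine le_trans (limsup_aux _ _ (diff_tendsto_aux F f hunif x u hu)) ?_
    refine le_iInf₂ fun ε hε => ?_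
    refine limsup_le_of_le (by isBoundedDefault) ?_
    filter_upwards [hu (Metric.ball_mem_nhds x hε)] with n hn
    exact le_iSup₂ (f := fun (y : T) (_ : y ∈ Metric.ball x ε) => (f y : EReal)) (u n) hn
  · have hL : ⊥ < uscHull f x := by
      refine lt_of_lt_of_le (EReal.bot_lt_coe (f x)) (le_iInf₂ fun ε hε => ?_)
      exact le_iSup₂ (f := fun (y : T) (_ : y ∈ Metric.ball x ε) => (f y : EReal)) x
        (Metric.mem_ball_self hε)
    obtain ⟨g, -, hg, hgt⟩ := exists_seq_strictMono_tendsto' hL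
    have hex : ∀ n : ℕ, ∃ y ∈ Metric.ball x (1 / ((n : ℝ) + 1)), g n < (f y : EReal) := by
      intro n
      have h1 : g n < (⨆ (y : T) (_ : y ∈ Metric.ball x (1 / ((n : ℝ) + 1))), (f y : EReal)) :=
        lt_of_lt_of_le (hg n).2 (iInf₂_le (f := fun (ε : ℝ) (_ : 0 < ε) =>
          ⨆ (y : T) (_ : y ∈ Metric.ball x ε), (f y : EReal)) _ Nat.one_div_pos_of_nat)
      simpa only [lt_iSup_iff, exists_prop] using h1
    choose u hu1 hu2 using hex
    have hu := tendsto_aux x u hu1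
    refine ⟨u, hu, le_trans ?_ (liminf_aux _ _ (diff_tendsto_aux F f hunif x u hu))⟩
    rw [← hgt.liminf_eq]
    exact liminf_le_liminf (Eventually.of_forall fun n => (hu2 n).le)
end
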